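/- For any real ε > 0, there is a constant C = C(ε) such that for any integers n, s satisfying n ≥ C·s^2 and s ≥ C, there is a nonempty s-uniform hypergraph 𝒯 on n vertices satisfying: (1) the maximum degree of 𝒯 is at most C; (2) |e ∩ e'| < ε·s for all distinct edges e, e' of 𝒯; (3) for any set A ⊆ V(𝒯) with |A| ≥ ε·n, there are at most ε·e(𝒯) edges e of 𝒯 such that ||e ∩ A| − (|A|/n)·s| > ε·s, where e(𝒯) is the number of edges of 𝒯. -/

import Mathlib

attribute [local instance] Classical.propDecidable

theorem perm_count {V : Type} [Fintype V] [DecidableEq V] (B S : Finset V) (j : V) (hj : j ∉ S) :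
    Fintype.card V * (Finset.univ.filter fun σ : Equiv.Perm V => ∀ v ∈ insert j S, σ v ∈ B).card
      ≤ B.card * (Finset.univ.filter fun σ : Equiv.Perm V => ∀ v ∈ S, σ v ∈ B).card := by
  set G := Finset.univ.filter fun σ : Equiv.Perm V => ∀ v ∈ S, σ v ∈ B with hG
  have h1 := Finset.sum_card_bipartiteAbove_eq_sum_card_bipartiteBelow
    (fun (σ : Equiv.Perm V) (v : V) => σ v ∈ B) (s := G) (t := Finset.univ)
  have h2 : ∀ σ ∈ G, (Finset.bipartiteAbove (fun (σ : Equiv.Perm V) (v : V) => σ v ∈ B)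
      Finset.univ σ).card = B.card := by
    intro σ _
    refine Finset.card_bij (fun v _ => σ v) ?_ ?_ ?_
    · intro a ha; simpa [Finset.bipartiteAbove] using ha
    · intro a _ b _ h; exact σ.injective h
    · intro b hb; exact ⟨σ.symm b, by simpa [Finset.bipartiteAbove] using hb, by simp⟩
  rw [Finset.sum_congr rfl h2, Finset.sum_const, smul_eq_mul] at h1
  rw [mul_comm B.card, h1, ← Finset.card_univ, ← smul_eq_mul]
  refine Finset.card_nsmul_le_sum _ _ _ ?_
  intro j' _
  by_cases hj' : j' ∈ S
  · refine Finset.card_le_card ?_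
    intro σ hσ
    simp only [Finset.mem_filter, Finset.mem_univ, true_and, Finset.bipartiteBelow, hG] at hσ ⊢
    have : ∀ v ∈ S, σ v ∈ B := fun v hv => hσ v (Finset.mem_insert_of_mem hv)
    exact ⟨this, this _ hj'⟩
  · refine Finset.card_le_card_of_injOn (fun σ => Equiv.swap j j' * 1 |> fun τ => σ * τ) ?_ ?_
    · intro σ hσ
      simp only [Finset.mem_filter, Finset.mem_univ, true_and, Finset.bipartiteBelow, hG,
        Finset.mem_coe] at hσ ⊢
      refine ⟨fun v hv => ?_, ?_⟩
      · have a1 : v ≠ j := fun h => hj (h ▸ hv)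
        have a2 : v ≠ j' := fun h => hj' (h ▸ hv)
        simpa [Equiv.swap_apply_of_ne_of_ne a1 a2] using hσ v (Finset.mem_insert_of_mem hv)
      · simpa using hσ j (Finset.mem_insert_self _ _)
    · intro a _ b _ h
      exact mul_right_cancel h

theorem perm_count_le {V : Type} [Fintype V] [DecidableEq V] (B S : Finset V) :
    ((Finset.univ.filter fun σ : Equiv.Perm V => ∀ v ∈ S, σ v ∈ B).card : ℝ)
      ≤ (Fintype.card (Equiv.Perm V) : ℝ) * ((B.card : ℝ) / Fintype.card V) ^ S.card := by
  induction S using Finset.induction_on with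
  | empty => simp
  | insert j S hj ih =>
    have h := perm_count B S j hj
    have hV : 0 < (Fintype.card V : ℝ) := by
      have : 0 < Fintype.card V := Fintype.card_pos_iff.mpr ⟨j⟩
      exact_mod_cast this
    have h' : (Fintype.card V : ℝ) *
        ((Finset.univ.filter fun σ : Equiv.Perm V => ∀ v ∈ insert j S, σ v ∈ B).card : ℝ)
      ≤ B.card * ((Finset.univ.filter fun σ : Equiv.Perm V => ∀ v ∈ S, σ v ∈ B).card : ℝ) := by
      exact_mod_cast h
    rw [Finset.card_insert_of_notMem hj, pow_succ, ← mul_assoc, mul_div_assoc', le_div_iff₀ hV,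
      mul_comm _ (Fintype.card V : ℝ)]
    refine h'.trans ?_
    rw [mul_comm]
    exact mul_le_mul_of_nonneg_right ih (by positivity)

theorem perm_mgf {V : Type} [Fintype V] [DecidableEq V] (A B : Finset V) (x : ℝ) (hx : 1 ≤ x) :
    ∑ σ : Equiv.Perm V, x ^ (A.filter fun v => σ v ∈ B).card
      ≤ (Fintype.card (Equiv.Perm V) : ℝ) *
        (1 + (x - 1) * ((B.card : ℝ) / Fintype.card V)) ^ A.card := by
  have h1 : ∀ σ : Equiv.Perm V, x ^ (A.filter fun v => σ v ∈ B).card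
      = ∑ S ∈ A.powerset, (x - 1) ^ S.card * (if ∀ v ∈ S, σ v ∈ B then (1 : ℝ) else 0) := by
    intro σ
    have : x ^ (A.filter fun v => σ v ∈ B).card
        = ∏ v ∈ A, (1 + (x - 1) * (if σ v ∈ B then (1 : ℝ) else 0)) := by
      rw [← Finset.prod_const, Finset.prod_filter]
      refine Finset.prod_congr rfl fun v _ => ?_
      split_ifs <;> ring
    rw [this, Finset.prod_one_add]
    refine Finset.sum_congr rfl fun S _ => ?_
    rw [Finset.prod_mul_distrib, Finset.prod_const]
    congr 1
    rw [Finset.prod_ite_zero]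
    simp
  simp_rw [h1]
  rw [Finset.sum_comm]
  have h2 : (1 + (x - 1) * ((B.card : ℝ) / Fintype.card V)) ^ A.card
      = ∑ S ∈ A.powerset, ((x - 1) * ((B.card : ℝ) / Fintype.card V)) ^ S.card := by
    rw [← Finset.prod_const, Finset.prod_one_add]
    simp
  rw [h2, Finset.mul_sum]
  refine Finset.sum_le_sum fun S _ => ?_
  rw [← Finset.mul_sum, Finset.sum_boole, mul_pow, mul_left_comm]
  exact mul_le_mul_of_nonneg_left (perm_count_le B S) (pow_nonneg (by linarith) _)

theorem resample {ι X : Type} [Fintype ι] [DecidableEq ι] [Fintype X] (i : ι) (g : (ι → X) → ℝ) (K : ℝ)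
    (h : ∀ w : ι → X, ∑ τ : X, g (Function.update w i τ) ≤ Fintype.card X * K) :
    ∑ w : ι → X, g w ≤ Fintype.card (ι → X) * K := by
  by_cases hX : Nonempty X
  swap
  · have : IsEmpty (ι → X) := ⟨fun w => hX ⟨w i⟩⟩
    simp
  have h1 : ∑ p : (ι → X) × X, g (Function.update p.1 i p.2) = ∑ p : (ι → X) × X, g p.1 := by
    refine Finset.sum_bij' (fun p _ => (Function.update p.1 i p.2, p.1 i))
      (fun p _ => (Function.update p.1 i p.2, p.1 i)) ?_ ?_ ?_ ?_ ?_ <;> simp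
  rw [Fintype.sum_prod_type, Fintype.sum_prod_type] at h1
  simp only [Finset.sum_const, Finset.card_univ, nsmul_eq_mul] at h1
  rw [← Finset.mul_sum] at h1
  have h2 := Finset.sum_le_sum fun w (_ : w ∈ (Finset.univ : Finset (ι → X))) => h w
  rw [h1, Finset.sum_const, Finset.card_univ, nsmul_eq_mul] at h2
  have hpos : 0 < (Fintype.card X : ℝ) := by exact_mod_cast Fintype.card_pos
  refine le_of_mul_le_mul_left ?_ hpos
  linarith

/-- MGF for a pair of columns. -/
theorem pair_mgf {d s N : ℕ} (hN : 0 < N) (i i' : Fin s) (hi : i ≠ i') (A B : Finset (Fin N)) (l : ℝ)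
    (hl : 0 ≤ l) (hl1 : l ≤ 1) :
    ∑ π : Fin d → Fin s → Equiv.Perm (Fin N),
      Real.exp (l * (((∑ r, (Finset.univ.filter fun j => π r i j ∈ A ∧ π r i' j ∈ B).card : ℕ) : ℝ)
        - d * (A.card * B.card / N)))
      ≤ Fintype.card (Fin d → Fin s → Equiv.Perm (Fin N)) * Real.exp (d * (l ^ 2 * N)) := by
  have hN' : (0:ℝ) < N := by exact_mod_cast hN
  have hA : (A.card : ℝ) ≤ N := by exact_mod_cast (Finset.card_le_univ A).trans (by simp)
  have hB : (B.card : ℝ) ≤ N := by exact_mod_cast (Finset.card_le_univ B).trans (by simp)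
  set h : (Fin s → Equiv.Perm (Fin N)) → ℝ := fun w =>
    Real.exp (l * (((Finset.univ.filter fun j => w i j ∈ A ∧ w i' j ∈ B).card : ℝ)
        - (A.card * B.card / N))) with hh
  have e1 : ∀ π : Fin d → Fin s → Equiv.Perm (Fin N),
      Real.exp (l * (((∑ r, (Finset.univ.filter fun j => π r i j ∈ A ∧ π r i' j ∈ B).card : ℕ) : ℝ)
        - d * (A.card * B.card / N))) = ∏ r, h (π r) := by
    intro π
    rw [hh, ← Real.exp_sum]
    congr 1
    rw [← Finset.mul_sum, Finset.sum_sub_distrib]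
    simp
  simp_rw [e1]
  rw [← Fintype.sum_pow h d] 
  have e2 : ∑ w, h w ≤ Fintype.card (Fin s → Equiv.Perm (Fin N)) * Real.exp (l ^ 2 * N) := by
    refine resample i' h _ ?_
    intro w
    have := perm_mgf (Finset.univ.filter fun j => w i j ∈ A) B (Real.exp l) (Real.one_le_exp hl)
    have c : (Finset.univ.filter fun j => w i j ∈ A).card = A.card := by
      refine Finset.card_bij (fun v _ => w i v) ?_ ?_ ?_
      · intro a ha; simpa using ha
      · intro a _ b _ h; exact (w i).injective h
      · intro b hb; exact ⟨(w i).symm b, by simpa using hb, by simp⟩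
    rw [c] at this
    have e3 : ∀ τ, h (Function.update w i' τ) = Real.exp (-(l * (A.card * B.card / N))) *
        Real.exp l ^ ((Finset.univ.filter fun j => w i j ∈ A).filter fun v => τ v ∈ B).card := by
      intro τ
      rw [hh, ← Real.exp_nat_mul, ← Real.exp_add, Finset.filter_filter]
      simp only [Function.update_self, Function.update_of_ne hi]
      congr 1
      ring
    simp_rw [e3]
    rw [← Finset.mul_sum]
    refine (mul_le_mul_of_nonneg_left this (Real.exp_nonneg _)).trans ?_
    rw [mul_left_comm]
    refine mul_le_mul_of_nonneg_left ?_ (by positivity)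
    have q := Real.abs_exp_sub_one_sub_id_le (x := l) (by rw [abs_of_nonneg hl]; exact hl1)
    have q' : Real.exp l - 1 ≤ l + l ^ 2 := by linarith [(abs_le.mp q).2]
    have q0 : 0 ≤ Real.exp l - 1 := by linarith [Real.one_le_exp hl]
    have hb : (0:ℝ) ≤ (B.card : ℝ) / N := by positivity
    have u : (1 + (Real.exp l - 1) * ((B.card : ℝ) / Fintype.card (Fin N))) ^ A.card
        ≤ Real.exp (A.card * ((l + l ^ 2) * ((B.card : ℝ) / N))) := by
      rw [Real.exp_nat_mul, Fintype.card_fin]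
      refine pow_le_pow_left₀ (by positivity) ?_ _
      have := Real.add_one_le_exp ((l + l ^ 2) * ((B.card : ℝ) / N))
      have := mul_le_mul_of_nonneg_right q' hb
      linarith
    refine (mul_le_mul_of_nonneg_left u (Real.exp_nonneg _)).trans ?_
    rw [← Real.exp_add, Real.exp_le_exp]
    have : (A.card * (B.card / N) : ℝ) ≤ N * 1 := by
      apply mul_le_mul hA _ hb hN'.le
      rw [div_le_one hN']; exact hB
    have := mul_le_mul_of_nonneg_left this (sq_nonneg l)
    have e : -(l * (A.card * B.card / N : ℝ)) + A.card * ((l + l ^ 2) * (B.card / N))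
      = l ^ 2 * (A.card * (B.card / N)) := by ring
    rw [e]; linarith
  have e0 : 0 ≤ ∑ w, h w := Finset.sum_nonneg fun w _ => (Real.exp_pos _).le
  refine (pow_le_pow_left₀ e0 e2 d).trans (le_of_eq ?_)
  rw [mul_pow, ← Real.exp_nat_mul, Fintype.card_fun (α := Fin d), Fintype.card_fin]
  push_cast
  rfl

theorem inter_mgf {d s N : ℕ} (hN : 0 < N) (r r' : Fin d) (hr : r ≠ r') (j j' : Fin N) :
    ∑ π : Fin d → Fin s → Equiv.Perm (Fin N),
      (N : ℝ) ^ (Finset.univ.filter fun i => π r' i j' = π r i j).card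
      ≤ Fintype.card (Fin d → Fin s → Equiv.Perm (Fin N)) * 2 ^ s := by
  have hN' : (1:ℝ) ≤ N := by exact_mod_cast hN
  refine resample r' _ _ ?_
  intro w
  simp only [Function.update_self, Function.update_of_ne hr]
  have e1 : ∀ τ : Fin s → Equiv.Perm (Fin N),
      (N : ℝ) ^ (Finset.univ.filter fun i => τ i j' = w r i j).card
      = ∏ i, (N : ℝ) ^ (({j'} : Finset (Fin N)).filter fun v => τ i v ∈ ({w r i j} : Finset (Fin N))).card := by
    intro τ
    rw [← Finset.prod_const, Finset.prod_filter]
    refine Finset.prod_congr rfl fun i _ => ?_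
    rw [Finset.filter_singleton]
    by_cases h : τ i j' = w r i j <;> simp [h]
  simp_rw [e1]
  rw [← Fintype.prod_sum (fun i (t : Equiv.Perm (Fin N)) => (N : ℝ) ^ (({j'} : Finset (Fin N)).filter fun v => t v ∈ ({w r i j} : Finset (Fin N))).card)]
  have e2 : ∀ i ∈ (Finset.univ : Finset (Fin s)), ∑ t : Equiv.Perm (Fin N), (N : ℝ) ^ (({j'} : Finset (Fin N)).filter fun v => t v ∈ ({w r i j} : Finset (Fin N))).card ≤ Fintype.card (Equiv.Perm (Fin N)) * 2 := by
    intro i _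
    refine (perm_mgf {j'} {w r i j} (N : ℝ) hN').trans ?_
    refine mul_le_mul_of_nonneg_left ?_ (by positivity)
    simp only [Finset.card_singleton, pow_one, Fintype.card_fin, Nat.cast_one]
    have : ((N : ℝ) - 1) * (1 / N) ≤ 1 := by
      rw [mul_one_div, div_le_one (by linarith)]; linarith
    linarith
  refine (Finset.prod_le_prod (fun i _ => Finset.sum_nonneg fun t _ => by positivity) e2).trans
    (le_of_eq ?_)
  rw [Finset.prod_const, mul_pow, Finset.card_univ, Fintype.card_fun (α := Fin s), Fintype.card_fin]
  push_cast
  rfl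

theorem exists_good {d s N : ℕ} (ε δ : ℝ) (hε : 0 < ε) (hδ : 0 < δ) (hδ1 : δ ≤ 1) (hsN : s ≤ N)
    (hN : 0 < N) (hd : 16 / δ ^ 2 ≤ d) (hNd : 2 * d ≤ N)
    (hlog : 2 / ε ≤ Real.log N) (hs : 8 / ε ≤ s) :
    ∃ π : Fin d → Fin s → Equiv.Perm (Fin N),
      (∀ i i', i ≠ i' → ∀ A B : Finset (Fin N),
        ((∑ r, (Finset.univ.filter fun j => π r i j ∈ A ∧ π r i' j ∈ B).card : ℕ) : ℝ)
        ≤ d * (A.card * B.card / N) + δ * d * N) ∧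
      (∀ r r', r ≠ r' → ∀ j j',
        ((Finset.univ.filter fun i => π r' i j' = π r i j).card : ℝ) < ε * s) := by
  have hN' : (0:ℝ) < N := by exact_mod_cast hN
  set Ω := Fin d → Fin s → Equiv.Perm (Fin N) with hΩ
  set I := Finset.univ.filter fun q : (Fin s × Fin s) × (Finset (Fin N) × Finset (Fin N)) =>
    q.1.1 ≠ q.1.2 with hI
  set J := Finset.univ.filter fun q : (Fin d × Fin d) × (Fin N × Fin N) => q.1.1 ≠ q.1.2 with hJ
  set W : (Fin s × Fin s) × (Finset (Fin N) × Finset (Fin N)) → Ω → ℝ := fun q π =>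
    Real.exp (δ / 2 * (((∑ r, (Finset.univ.filter fun j => π r q.1.1 j ∈ q.2.1 ∧ π r q.1.2 j ∈ q.2.2).card : ℕ) : ℝ)
        - d * (q.2.1.card * q.2.2.card / N))) * Real.exp (-(δ / 2 * (δ * d * N))) with hW
  set U : (Fin d × Fin d) × (Fin N × Fin N) → Ω → ℝ := fun q π =>
    (N : ℝ) ^ (Finset.univ.filter fun i => π q.1.2 i q.2.2 = π q.1.1 i q.2.1).card *
      Real.exp (-(ε * s * Real.log N)) with hU
  have W0 : ∀ q π, 0 ≤ W q π := fun q π => by rw [hW]; positivity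
  have U0 : ∀ q π, 0 ≤ U q π := fun q π => by rw [hU]; positivity
  have hΩp : 0 < (Fintype.card Ω : ℝ) := by exact_mod_cast Fintype.card_pos
  have hW1 : ∀ q ∈ I, ∑ π, W q π ≤ Fintype.card Ω * Real.exp (-(4 * N)) := by
    intro q hq
    rw [hI, Finset.mem_filter] at hq
    rw [hW, ← Finset.sum_mul]
    refine (mul_le_mul_of_nonneg_right (pair_mgf (d := d) hN q.1.1 q.1.2 hq.2 q.2.1 q.2.2 (δ / 2)
      (by linarith) (by linarith)) (Real.exp_nonneg _)).trans ?_
    rw [mul_assoc, ← Real.exp_add]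
    refine mul_le_mul_of_nonneg_left ?_ hΩp.le
    rw [Real.exp_le_exp]
    rw [div_le_iff₀ (by positivity)] at hd
    nlinarith
  have hU1 : ∀ q ∈ J, ∑ π, U q π ≤ Fintype.card Ω * ((N : ℝ) ^ 4)⁻¹ := by
    intro q hq
    rw [hJ, Finset.mem_filter] at hq
    rw [hU, ← Finset.sum_mul]
    refine (mul_le_mul_of_nonneg_right (inter_mgf (s := s) hN q.1.1 q.1.2 hq.2 q.2.1 q.2.2)
      (Real.exp_nonneg _)).trans ?_
    rw [mul_assoc]
    refine mul_le_mul_of_nonneg_left ?_ hΩp.le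
    have h2 : (2 : ℝ) ^ s ≤ Real.exp (s * 1) := by
      rw [Real.exp_nat_mul]
      exact pow_le_pow_left₀ (by norm_num) (by linarith [Real.add_one_le_exp (1:ℝ)]) _
    have h4 : ((N : ℝ) ^ 4)⁻¹ = Real.exp (-(4 * Real.log N)) := by
      rw [Real.exp_neg, show (4 : ℝ) = ((4 : ℕ) : ℝ) by norm_num, Real.exp_nat_mul,
        Real.exp_log hN']
    refine (mul_le_mul_of_nonneg_right h2 (Real.exp_nonneg _)).trans ?_
    rw [h4, ← Real.exp_add, Real.exp_le_exp]
    rw [div_le_iff₀ hε] at hlog hs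
    have hL : 0 ≤ Real.log N := by
      by_contra hc
      nlinarith
    have s0 : (0:ℝ) ≤ s := by positivity
    nlinarith [mul_le_mul_of_nonneg_left hlog s0, mul_le_mul_of_nonneg_right hs hL]
  have hIc : (I.card : ℝ) ≤ N ^ 2 * Real.exp (2 * N) := by
    have h1 : I.card ≤ (s * s) * (2 ^ N * 2 ^ N) := by
      refine (Finset.card_le_univ _).trans (le_of_eq ?_)
      simp
    have h2 : (2 : ℝ) ^ N ≤ Real.exp N := by
      rw [← mul_one (N : ℝ), Real.exp_nat_mul]
      exact pow_le_pow_left₀ (by norm_num) (by linarith [Real.add_one_le_exp (1:ℝ)]) _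
    have h3 : (I.card : ℝ) ≤ (s * s) * (2 ^ N * 2 ^ N) := by exact_mod_cast h1
    have h4 : (s : ℝ) ≤ N := by exact_mod_cast hsN
    refine h3.trans ?_
    rw [two_mul, Real.exp_add, sq]
    gcongr
  have hJc : (J.card : ℝ) ≤ (d * N) ^ 2 := by
    have h1 : J.card ≤ (d * d) * (N * N) := by
      refine (Finset.card_le_univ _).trans (le_of_eq ?_)
      simp
    have h3 : (J.card : ℝ) ≤ (d * d) * (N * N) := by exact_mod_cast h1
    linarith
  have key : ∑ π : Ω, (∑ q ∈ I, W q π + ∑ q ∈ J, U q π) < ∑ π : Ω, (1 : ℝ) := by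
    rw [Finset.sum_add_distrib, Finset.sum_comm, Finset.sum_comm (t := J)]
    have a1 := Finset.sum_le_sum hW1
    have a2 := Finset.sum_le_sum hU1
    rw [Finset.sum_const, nsmul_eq_mul] at a1 a2
    simp only [Finset.sum_const, nsmul_eq_mul, Finset.card_univ, mul_one]
    have b1 : (I.card : ℝ) * (Fintype.card Ω * Real.exp (-(4 * N))) < Fintype.card Ω * (1 / 2) := by
      have : (I.card : ℝ) * Real.exp (-(4 * N)) < 1 / 2 := by
        refine (mul_le_mul_of_nonneg_right hIc (Real.exp_nonneg _)).trans_lt ?_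
        rw [mul_assoc, ← Real.exp_add, show (2 * (N:ℝ) + -(4 * N)) = -(2 * N) by ring, Real.exp_neg,
          ← div_eq_mul_inv, div_lt_iff₀ (Real.exp_pos _)]
        have := Real.quadratic_le_exp_of_nonneg (x := 2 * (N : ℝ)) (by positivity)
        nlinarith
      rw [mul_left_comm]
      exact mul_lt_mul_of_pos_left this hΩp
    have b2 : (J.card : ℝ) * (Fintype.card Ω * ((N : ℝ) ^ 4)⁻¹) ≤ Fintype.card Ω * (1 / 2) := by
      rw [mul_left_comm]
      refine mul_le_mul_of_nonneg_left ?_ hΩp.le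
      rw [← div_eq_mul_inv, div_le_iff₀ (by positivity)]
      refine hJc.trans ?_
      have h : (2 * d : ℝ) ≤ N := by exact_mod_cast hNd
      have h' : (2 * d : ℝ) * (2 * d) ≤ N * N := mul_le_mul h h (by positivity) (by positivity)
      have := mul_le_mul_of_nonneg_right h' (sq_nonneg (N : ℝ))
      nlinarith [sq_nonneg ((d:ℝ) * N)]
    linarith
  obtain ⟨π, -, hπ⟩ := Finset.exists_lt_of_sum_lt key
  have c1 : 0 ≤ ∑ q ∈ I, W q π := Finset.sum_nonneg fun q _ => W0 q π
  have c2 : 0 ≤ ∑ q ∈ J, U q π := Finset.sum_nonneg fun q _ => U0 q π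
  refine ⟨π, ?_, ?_⟩
  · intro i i' hi A B
    have h := Finset.single_le_sum (f := fun q => W q π) (fun q _ => W0 q π)
      (show ((i, i'), (A, B)) ∈ I by simp [hI, hi])
    have h1 : W ((i, i'), (A, B)) π < 1 := by
      linarith
    simp only [hW] at h1
    rw [← Real.exp_add, Real.exp_lt_one_iff] at h1
    by_contra hc
    push Not at hc
    nlinarith
  · intro r r' hr j j'
    have h := Finset.single_le_sum (f := fun q => U q π) (fun q _ => U0 q π)
      (show ((r, r'), (j, j')) ∈ J by simp [hJ, hr])
    have h1 : U ((r, r'), (j, j')) π < 1 := by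
      linarith
    simp only [hU] at h1
    have hL : 0 < Real.log N := lt_of_lt_of_le (by positivity) hlog
    have e : ∀ k : ℕ, (N : ℝ) ^ k = Real.exp (k * Real.log N) := fun k => by
      rw [Real.exp_nat_mul, Real.exp_log hN']
    rw [e, ← Real.exp_add, Real.exp_lt_one_iff] at h1
    by_contra hc
    push Not at hc
    nlinarith [mul_le_mul_of_nonneg_right hc hL.le]

theorem sum_perm_ind {N : ℕ} (p : Equiv.Perm (Fin N)) (A : Finset (Fin N)) :
    ∑ j, (if p j ∈ A then (1 : ℝ) else 0) = A.card := by
  rw [Equiv.sum_comp p (fun x => if x ∈ A then (1 : ℝ) else 0)]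
  simp

theorem second_moment {d s N : ℕ} (δ : ℝ) (hδ : 0 < δ) (hN : 0 < N)
    (π : Fin d → Fin s → Equiv.Perm (Fin N))
    (hπ : ∀ i i', i ≠ i' → ∀ A B : Finset (Fin N),
        ((∑ r, (Finset.univ.filter fun j => π r i j ∈ A ∧ π r i' j ∈ B).card : ℕ) : ℝ)
        ≤ d * (A.card * B.card / N) + δ * d * N) (A : Fin s → Finset (Fin N)) :
    ∑ r, ∑ j, (((Finset.univ.filter fun i => π r i j ∈ A i).card : ℝ) - (∑ i, ((A i).card : ℝ)) / N) ^ 2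
      ≤ d * N * (s + δ * s ^ 2) := by
  have hN' : (0:ℝ) < N := by exact_mod_cast hN
  set α : Fin s → ℝ := fun i => (A i).card / N with hα
  have α0 : ∀ i, 0 ≤ α i := fun i => by rw [hα]; positivity
  have α1 : ∀ i, α i ≤ 1 := fun i => by
    rw [hα]; simp only; rw [div_le_one hN']
    exact_mod_cast (Finset.card_le_univ (A i)).trans (by simp)
  have αN : ∀ i, ((A i).card : ℝ) = N * α i := fun i => by rw [hα]; field_simp
  set f : Fin s → Fin d → Fin N → ℝ := fun i r j => (if π r i j ∈ A i then (1 : ℝ) else 0) with hf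
  have e1 : ∀ r j, (((Finset.univ.filter fun i => π r i j ∈ A i).card : ℝ) - (∑ i, ((A i).card : ℝ)) / N) ^ 2
      = ∑ i, ∑ i', (f i r j - α i) * (f i' r j - α i') := by
    intro r j
    rw [← Finset.sum_mul_sum, ← sq, Finset.sum_sub_distrib, Finset.sum_div]
    simp [hf, hα]
  simp_rw [e1]
  have e2 : ∑ r, ∑ j, ∑ i, ∑ i', (f i r j - α i) * (f i' r j - α i')
      = ∑ i, ∑ i', ∑ r, ∑ j, (f i r j - α i) * (f i' r j - α i') := by
    simp_rw [Finset.sum_comm (s := (Finset.univ : Finset (Fin N))) (t := (Finset.univ : Finset (Fin s)))]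
    rw [Finset.sum_comm]
    refine Finset.sum_congr rfl fun i _ => ?_
    rw [Finset.sum_comm]
  rw [e2]
  have e3 : ∀ i i', ∑ r, ∑ j, (f i r j - α i) * (f i' r j - α i')
      ≤ d * N * ((if i = i' then (1 : ℝ) else 0) + δ) := by
    intro i i'
    by_cases h : i = i'
    · subst h
      have : ∀ r j, (f i r j - α i) * (f i r j - α i) ≤ 1 := by
        intro r j
        have : |f i r j - α i| ≤ 1 := by
          rw [abs_le]
          simp only [hf]
          split_ifs <;> constructor <;> linarith [α0 i, α1 i]
        rw [← sq, ← sq_abs]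
        exact pow_le_one₀ (abs_nonneg _) this
      refine (Finset.sum_le_sum fun r _ => Finset.sum_le_sum fun j _ => this r j).trans ?_
      simp
      nlinarith [show (0:ℝ) ≤ d * N * δ by positivity]
    · have g1 : ∀ r, ∑ j, (f i r j - α i) * (f i' r j - α i')
          = (Finset.univ.filter fun j => π r i j ∈ A i ∧ π r i' j ∈ A i').card - N * (α i * α i') := by
        intro r
        have t : ∀ j, (f i r j - α i) * (f i' r j - α i')
          = (if π r i j ∈ A i ∧ π r i' j ∈ A i' then (1:ℝ) else 0) - α i' * f i r j - α i * f i' r j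
            + α i * α i' := by
          intro j
          have : (if π r i j ∈ A i ∧ π r i' j ∈ A i' then (1:ℝ) else 0) = f i r j * f i' r j := by
            simp only [hf, ite_and]
            split_ifs <;> simp
          rw [this]; ring
        simp_rw [t]
        rw [Finset.sum_add_distrib, Finset.sum_sub_distrib, Finset.sum_sub_distrib,
          ← Finset.mul_sum, ← Finset.mul_sum, sum_perm_ind (π r i) (A i),
          sum_perm_ind (π r i') (A i'), αN i, αN i', Finset.sum_boole]
        simp
        ring
      simp_rw [g1]
      have := hπ i i' h (A i) (A i')
      rw [αN i, αN i'] at this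
      push_cast at this
      rw [Finset.sum_sub_distrib]
      simp [h]
      have e : (d : ℝ) * (N * α i * (N * α i') / N) = d * (N * (α i * α i')) := by
        field_simp
      rw [e] at this
      linarith
  refine (Finset.sum_le_sum fun i _ => Finset.sum_le_sum fun i' _ => e3 i i').trans (le_of_eq ?_)
  simp_rw [← Finset.mul_sum, Finset.sum_add_distrib]
  simp
  left; ring

theorem density_close (s N n M a : ℝ) (hs : 0 < s) (hN : 0 < N) (h1 : s * N ≤ n)
    (h2 : n ≤ s * N + s) (hM : M ≤ s * N) (hMa : M ≤ a) (haM : a - M ≤ n - s * N) (hsn : s ^ 2 ≤ n)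
    (hM0 : 0 ≤ M) : |M / N - a / n * s| ≤ 1 := by
  have hn : 0 < n := by nlinarith [mul_pos hs hN]
  rw [abs_le]
  constructor
  · have q1 : a / n * s ≤ (M + s) / n * s := by gcongr; linarith
    have q2 : M * s / n ≤ M / N := by
      rw [div_le_div_iff₀ hn hN]; nlinarith
    have q3 : (M + s) / n * s = M * s / n + s ^ 2 / n := by ring
    have q4 : s ^ 2 / n ≤ 1 := by rw [div_le_one hn]; exact hsn
    linarith
  · have q1 : M / n * s ≤ a / n * s := by gcongr
    have q2 : M / N ≤ M / n * s + 1 := by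
      have : M / n * s + 1 = (M * s + n) / n := by field_simp
      rw [this, div_le_div_iff₀ hN hn]
      have : M * (n - s * N) ≤ s * N * s := mul_le_mul hM (by linarith) (by linarith) (by positivity)
      nlinarith
    linarith

set_option maxHeartbeats 2000000 in
theorem core (ε : ℝ) (hε : 0 < ε) (hε1 : ε ≤ 1) :
    ∃ C : ℝ, 0 < C ∧ ∀ n s : ℕ, C * (s : ℝ) ^ 2 ≤ (n : ℝ) → C ≤ (s : ℝ) →
      ∃ T : Finset (Finset (Fin n)),
        T.Nonempty ∧
        (∀ e ∈ T, e.card = s) ∧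
        (∀ v : Fin n, ((T.filter fun e => v ∈ e).card : ℝ) ≤ C) ∧
        (∀ e ∈ T, ∀ e' ∈ T, e ≠ e' → ((e ∩ e').card : ℝ) < ε * (s : ℝ)) ∧
        ∀ A : Finset (Fin n), 
          ((T.filter fun e =>
              ε * (s : ℝ) < |((e ∩ A).card : ℝ) - (A.card : ℝ) / (n : ℝ) * (s : ℝ)|).card : ℝ)
            ≤ ε * (T.card : ℝ) := by
  set δ : ℝ := ε ^ 3 / 8 with hδ
  have ε3 : 0 < ε ^ 3 := by positivity
  have ε31 : ε ^ 3 ≤ ε := by nlinarith [mul_pos hε hε, mul_nonneg hε.le (sub_nonneg.mpr hε1)]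
  have hδ0 : 0 < δ := by positivity
  have hδ1 : δ ≤ 1 := by rw [hδ]; linarith
  set d : ℕ := ⌈16 / δ ^ 2⌉₊ with hd
  have hd1 : 16 / δ ^ 2 ≤ d := Nat.le_ceil _
  have hd0 : 0 < d := Nat.ceil_pos.mpr (by positivity)
  have p1 : 0 < Real.exp (2 / ε) := Real.exp_pos _
  have p2 : 0 < 8 / ε ^ 3 := by positivity
  refine ⟨Real.exp (2 / ε) + 8 / ε ^ 3 + 2 * d + 2, by positivity, ?_⟩
  intro n s hn hs
  set C : ℝ := Real.exp (2 / ε) + 8 / ε ^ 3 + 2 * d + 2 with hC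
  have d0 : (0:ℝ) ≤ d := by positivity
  have hs0 : (0:ℝ) < s := by linarith
  have hs1 : (1:ℝ) ≤ s := by linarith
  have hsN0 : 0 < s := by exact_mod_cast hs0
  set N : ℕ := n / s with hNdef
  have k1 : s * N ≤ n := Nat.mul_div_le n s
  have k2 : n < s * N + s := by
    have := Nat.lt_mul_div_succ n hsN0
    rw [← hNdef] at this; linarith
  have k1' : (s : ℝ) * N ≤ n := by exact_mod_cast k1
  have k2' : (n : ℝ) ≤ s * N + s := by exact_mod_cast k2.le
  have k3 : C * s ≤ N + 1 := by
    have : (C * s) * s ≤ (N + 1) * s := by nlinarith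
    exact le_of_mul_le_mul_right this hs0
  have k4 : (C - 1) * s ≤ N := by nlinarith
  have k5 : C - 1 ≤ N := by nlinarith
  have hNpos : (0:ℝ) < N := by linarith
  have hN : 0 < N := by exact_mod_cast hNpos
  have h8 : 8 / ε ≤ 8 / ε ^ 3 := by gcongr
  have hsN : s ≤ N := by
    have : (s : ℝ) ≤ N := by nlinarith
    exact_mod_cast this
  have hNd : 2 * d ≤ N := by
    have : (2 * d : ℝ) ≤ N := by linarith
    exact_mod_cast this
  obtain ⟨π, hπ1, hπ2⟩ := exists_good (d := d) (s := s) (N := N) ε δ hε hδ0 hδ1 hsN hN hd1 hNd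
    (by rw [Real.le_log_iff_exp_le hNpos]; linarith) (by linarith)
  obtain ⟨φ⟩ : Nonempty (Fin s × Fin N ↪ Fin n) :=
    Function.Embedding.nonempty_of_card_le (by simpa using k1)
  set E : Fin d × Fin N → Finset (Fin n) := fun p =>
    Finset.univ.image (fun i : Fin s => φ (i, π p.1 i p.2)) with hE
  have hEinj : ∀ p : Fin d × Fin N, Function.Injective (fun i : Fin s => φ (i, π p.1 i p.2)) := by
    intro p i i' h
    exact congrArg Prod.fst (φ.injective h)
  have hEc : ∀ p, (E p).card = s := by
    intro p
    simp only [hE]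
    rw [Finset.card_image_of_injective _ (hEinj p)]
    simp
  have hint : ∀ p q, p ≠ q → ((E p ∩ E q).card : ℝ) < ε * s := by
    intro p q hpq
    have hle : (E p ∩ E q).card
        ≤ (Finset.univ.filter fun i => π q.1 i q.2 = π p.1 i p.2).card := by
      refine (Finset.card_le_card (t := (Finset.univ.filter fun i => π q.1 i q.2 = π p.1 i p.2).image
        (fun i : Fin s => φ (i, π p.1 i p.2))) ?_).trans Finset.card_image_le
      intro v hv
      simp only [hE, Finset.mem_inter, Finset.mem_image, Finset.mem_univ, true_and] at hv
      obtain ⟨⟨i, rfl⟩, i', hi'⟩ := hv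
      have h := φ.injective hi'
      rw [Prod.mk.injEq] at h
      obtain ⟨rfl, h⟩ := h
      exact Finset.mem_image.mpr ⟨i', by simpa using h, rfl⟩
    by_cases hr : p.1 = q.1
    · have : (Finset.univ.filter fun i => π q.1 i q.2 = π p.1 i p.2) = ∅ := by
        rw [Finset.filter_eq_empty_iff]
        intro i _ h
        rw [hr] at h
        exact hpq (Prod.ext hr ((π q.1 i).injective h).symm)
      rw [this, Finset.card_empty] at hle
      have : (E p ∩ E q).card = 0 := by omega
      rw [this]
      simp only [Nat.cast_zero]; positivity
    · refine lt_of_le_of_lt ?_ (hπ2 p.1 q.1 hr p.2 q.2)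
      exact_mod_cast hle
  have hinj : Function.Injective E := by
    intro p q h
    by_contra hpq
    have := hint p q hpq
    rw [← h, Finset.inter_self, hEc] at this
    nlinarith
  have hTc : (Finset.univ.image E).card = d * N := by
    rw [Finset.card_image_of_injective _ hinj]; simp
  refine ⟨Finset.univ.image E, ?_, ?_, ?_, ?_, ?_⟩
  · rw [← Finset.card_pos, hTc]; positivity
  · intro e he
    obtain ⟨p, -, rfl⟩ := Finset.mem_image.mp he
    exact hEc p
  · intro v
    have : ((Finset.univ.image E).filter fun e => v ∈ e).card ≤ d := by
      by_cases hv : ∃ q, φ q = v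
      · obtain ⟨⟨i, x⟩, rfl⟩ := hv
        refine (Finset.card_le_card (t := (Finset.univ : Finset (Fin d)).image
          (fun r => E (r, (π r i).symm x))) ?_).trans (Finset.card_image_le.trans (by simp))
        intro e he
        rw [Finset.mem_filter, Finset.mem_image] at he
        obtain ⟨⟨p, -, rfl⟩, h⟩ := he
        simp only [hE, Finset.mem_image, Finset.mem_univ, true_and] at h
        obtain ⟨i', h⟩ := h
        have h := φ.injective h
        rw [Prod.mk.injEq] at h
        obtain ⟨rfl, rfl⟩ := h
        exact Finset.mem_image.mpr ⟨p.1, Finset.mem_univ _, by simp⟩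
      · have : ((Finset.univ.image E).filter fun e => v ∈ e) = ∅ := by
          rw [Finset.filter_eq_empty_iff]
          intro e he h
          obtain ⟨p, -, rfl⟩ := Finset.mem_image.mp he
          simp only [hE, Finset.mem_image, Finset.mem_univ, true_and] at h
          obtain ⟨i', h⟩ := h
          exact hv ⟨_, h⟩
        rw [this]; simp
    have : (((Finset.univ.image E).filter fun e => v ∈ e).card : ℝ) ≤ d := by exact_mod_cast this
    linarith
  · intro e he e' he' hne
    obtain ⟨p, -, rfl⟩ := Finset.mem_image.mp he
    obtain ⟨q, -, rfl⟩ := Finset.mem_image.mp he'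
    exact hint p q fun h => hne (h ▸ rfl)
  · intro A
    set B : Fin s → Finset (Fin N) := fun i => Finset.univ.filter fun x => φ (i, x) ∈ A with hB
    have hX : ∀ p, (E p ∩ A).card = (Finset.univ.filter fun i => π p.1 i p.2 ∈ B i).card := by
      intro p
      rw [← Finset.filter_mem_eq_inter]
      simp only [hE]
      rw [Finset.filter_image, Finset.card_image_of_injective _ (hEinj p)]
      simp [hB]
    have hM : ∑ i, (B i).card = (Finset.univ.filter fun q : Fin s × Fin N => φ q ∈ A).card := by
      simp only [hB, Finset.card_filter]
      rw [Fintype.sum_prod_type]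
    have hM1 : ∑ i, (B i).card ≤ A.card := by
      rw [hM]
      refine Finset.card_le_card_of_injOn φ ?_ φ.injective.injOn
      intro q hq; simpa using hq
    have hM2 : A.card - (∑ i, ((B i).card : ℝ)) ≤ n - s * N := by
      have h1 : (Finset.univ.filter fun q : Fin s × Fin N => ¬ φ q ∈ A).card ≤ (Aᶜ).card := by
        refine Finset.card_le_card_of_injOn φ ?_ φ.injective.injOn
        intro q hq; simpa using hq
      have h2 := Finset.card_filter_add_card_filter_not (s := (Finset.univ : Finset (Fin s × Fin N)))
        (fun q : Fin s × Fin N => φ q ∈ A)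
      rw [← hM] at h2
      have h3 := Finset.card_add_card_compl A
      simp only [Finset.card_univ, Fintype.card_prod, Fintype.card_fin] at h2 h3
      have h4 : s * N + A.card ≤ n + ∑ i, (B i).card := by omega
      have h5 : (s * N + A.card : ℝ) ≤ n + ∑ i, ((B i).card : ℝ) := by exact_mod_cast h4
      linarith
    have hM3 : ∑ i, ((B i).card : ℝ) ≤ s * N := by
      have : ∑ i, (B i).card ≤ s * N := by
        rw [hM]; refine (Finset.card_le_univ _).trans (by simp)
      exact_mod_cast this
    have hclose := density_close s N n (∑ i, ((B i).card : ℝ)) A.card hs0 hNpos k1' k2' hM3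
      (by exact_mod_cast hM1) hM2 (by nlinarith) (Finset.sum_nonneg fun i _ => by positivity)
    have hsec := second_moment δ hδ0 hN π hπ1 B
    rw [Finset.filter_image, Finset.card_image_of_injective _ hinj, hTc]
    set F := Finset.univ.filter fun p : Fin d × Fin N =>
      ε * (s : ℝ) < |((E p ∩ A).card : ℝ) - (A.card : ℝ) / (n : ℝ) * (s : ℝ)| with hF
    have h8s : 8 / ε ^ 3 ≤ s := by linarith
    have h8s' : 8 ≤ s * ε ^ 3 := by rwa [div_le_iff₀ ε3] at h8s
    have hes : 8 ≤ s * ε := by nlinarith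
    have hlow : (F.card : ℝ) * (ε * s / 2) ^ 2 ≤ ∑ r, ∑ j, (((Finset.univ.filter fun i => π r i j ∈ B i).card : ℝ) - (∑ i, ((B i).card : ℝ)) / N) ^ 2 := by
      rw [← Fintype.sum_prod_type' (f := fun r j => (((Finset.univ.filter fun i => π r i j ∈ B i).card : ℝ) - (∑ i, ((B i).card : ℝ)) / N) ^ 2)]
      rw [← nsmul_eq_mul]
      refine (Finset.card_nsmul_le_sum F (fun p => (((Finset.univ.filter fun i => π p.1 i p.2 ∈ B i).card : ℝ) - (∑ i, ((B i).card : ℝ)) / N) ^ 2) _ ?_).trans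
        (Finset.sum_le_sum_of_subset_of_nonneg (Finset.subset_univ _) fun p _ _ => sq_nonneg _)
      intro p hp
      have hp := (Finset.mem_filter.mp hp).2
      rw [hX] at hp
      rw [← sq_abs (_ - _)]
      refine pow_le_pow_left₀ (by positivity) ?_ _
      have := abs_sub_le ((Finset.univ.filter fun i => π p.1 i p.2 ∈ B i).card : ℝ)
        ((∑ i, ((B i).card : ℝ)) / N) ((A.card : ℝ) / (n : ℝ) * (s : ℝ))
      linarith
    have hfin := hlow.trans hsec
    have hb : (d : ℝ) * N * (s + δ * s ^ 2) ≤ (ε * (d * N)) * (ε * s / 2) ^ 2 := by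
      have : s + δ * s ^ 2 ≤ ε * (ε * s / 2) ^ 2 := by
        rw [hδ]
        nlinarith [mul_le_mul_of_nonneg_right h8s' hs0.le]
      calc (d : ℝ) * N * (s + δ * s ^ 2) ≤ (d : ℝ) * N * (ε * (ε * s / 2) ^ 2) :=
            mul_le_mul_of_nonneg_left this (by positivity)
        _ = _ := by ring
    push_cast
    exact le_of_mul_le_mul_right (hfin.trans hb) (by positivity)

/-- For any real `ε > 0` there is a constant `C = C(ε)` such that for all integers `n, s`
with `n ≥ C·s²` and `s ≥ C`, there is a nonempty `s`-uniform hypergraph `𝒯` on `n`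
vertices such that: (1) the maximum degree of `𝒯` is at most `C`; (2) `|e ∩ e'| < ε·s`
for all distinct edges `e, e'`; (3) for every `A ⊆ V(𝒯)` with `|A| ≥ ε·n`, at most
`ε·e(𝒯)` edges `e` satisfy `||e ∩ A| − (|A|/n)·s| > ε·s`. -/
theorem stmt_13 (ε : ℝ) (hε : 0 < ε) :
    ∃ C : ℝ, 0 < C ∧ ∀ n s : ℕ, C * (s : ℝ) ^ 2 ≤ (n : ℝ) → C ≤ (s : ℝ) →
      ∃ T : Finset (Finset (Fin n)),
        T.Nonempty ∧
        (∀ e ∈ T, e.card = s) ∧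
        (∀ v : Fin n, ((T.filter fun e => v ∈ e).card : ℝ) ≤ C) ∧
        (∀ e ∈ T, ∀ e' ∈ T, e ≠ e' → ((e ∩ e').card : ℝ) < ε * (s : ℝ)) ∧
        ∀ A : Finset (Fin n), ε * (n : ℝ) ≤ (A.card : ℝ) →
          ((T.filter fun e =>
              ε * (s : ℝ) < |((e ∩ A).card : ℝ) - (A.card : ℝ) / (n : ℝ) * (s : ℝ)|).card : ℝ)
            ≤ ε * (T.card : ℝ) := by
  obtain ⟨C, hC, h⟩ := core (min ε 1) (lt_min hε one_pos) (min_le_right _ _)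
  refine ⟨C, hC, fun n s hn hs => ?_⟩
  obtain ⟨T, h1, h2, h3, h4, h5⟩ := h n s hn hs
  refine ⟨T, h1, h2, h3, fun e he e' he' hne => (h4 e he e' he' hne).trans_le ?_, fun A _ => ?_⟩
  · exact mul_le_mul_of_nonneg_right (min_le_left _ _) (by positivity)
  · refine le_trans ?_ ((h5 A).trans (mul_le_mul_of_nonneg_right (min_le_left _ _) (by positivity)))
    have : (T.filter fun e =>
        ε * (s : ℝ) < |((e ∩ A).card : ℝ) - (A.card : ℝ) / (n : ℝ) * (s : ℝ)|).card
        ≤ (T.filter fun e => min ε 1 * (s : ℝ) <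
          |((e ∩ A).card : ℝ) - (A.card : ℝ) / (n : ℝ) * (s : ℝ)|).card := by
      refine Finset.card_le_card fun e he => ?_
      rw [Finset.mem_filter] at he ⊢
      exact ⟨he.1, lt_of_le_of_lt
        (mul_le_mul_of_nonneg_right (min_le_left _ _) (by positivity)) he.2⟩
    exact_mod_cast this
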